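/- Let F ⊆ ℝ^n (n ≥ 3) be compact with Hausdorff dimension strictly less than n − k − 1 for some integer k ≥ 1. Then the complement ℝ^n \ F is k-connected, i.e., π_i(ℝ^n \ F) = 0 for all 0 ≤ i ≤ k. -/

import Mathlib

open MeasureTheory

/-!
Two maps `I ^ i → Fᶜ` that agree on the boundary of the cube are joined by the straight-line
homotopy in the ambient space `E`, a map of the `(i + 1)`-dimensional cube whose boundary values lie
in `Fᶜ`. Without changing the boundary values, replace it by a map `g` that is `C¹` in the open
cube `U`, and let `φ` be a `C¹` function with support exactly `U`. The perturbation `g + φ • v` hits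
`F` inside `U` only if `v` lies in the image of `F × U` under the `C¹` map
`(p, w) ↦ (φ w)⁻¹ • (p - g w)`, which has dimension at most `dimH F + i + 1 < dim E`. So almost
every `v` pushes the homotopy off `F`, relative to the boundary.
-/

section HausdorffDimensionOfProducts

open Set Filter Topology
open scoped NNReal ENNReal

variable {X Y : Type*}

theorem ediam_prod_le [PseudoEMetricSpace X] [PseudoEMetricSpace Y] {s : Set X} {t : Set Y}
    {r : ℝ≥0∞} (hs : Metric.ediam s ≤ r) (ht : Metric.ediam t ≤ r) :
    Metric.ediam (s ×ˢ t) ≤ r :=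
  Metric.ediam_le fun _ hp _ hq ↦ max_le ((Metric.edist_le_ediam_of_mem hp.1 hq.1).trans hs)
    ((Metric.edist_le_ediam_of_mem hp.2 hq.2).trans ht)

theorem pre_ediam_rpow_prod_le_card_mul [EMetricSpace X] [EMetricSpace Y] {s : Set X} {K : Set Y}
    {t : Finset Y} {ε : ℝ≥0} {p : ℝ} (hp : 0 ≤ p) (hs : Metric.ediam s ≤ 2 * ε)
    (ht : Metric.IsCover ε K t) :
    OuterMeasure.mkMetric'.pre (fun u ↦ Metric.ediam u ^ p) (2 * ε) (s ×ˢ K) ≤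
      t.card * (2 * ε) ^ p := by
  have hcover : s ×ˢ K ⊆ ⋃ y ∈ t, s ×ˢ Metric.closedEBall y ε := by
    rw [← prod_iUnion₂]
    exact prod_mono_right (Metric.isCover_iff_subset_iUnion_closedEBall.1 ht)
  have hcell (y : Y) : Metric.ediam (s ×ˢ Metric.closedEBall y ε) ≤ 2 * ε :=
    ediam_prod_le hs Metric.ediam_closedEBall_le
  calc
    _ ≤ ∑ y ∈ t, OuterMeasure.mkMetric'.pre (fun u ↦ Metric.ediam u ^ p) (2 * ε)
          (s ×ˢ Metric.closedEBall y ε) :=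
        (measure_mono hcover).trans (measure_biUnion_finset_le _ _)
    _ ≤ ∑ _y ∈ t, (2 * ε : ℝ≥0∞) ^ p := Finset.sum_le_sum fun y _ ↦
        (OuterMeasure.mkMetric'.pre_le (hcell y)).trans (ENNReal.rpow_le_rpow (hcell y) hp)
    _ = t.card * (2 * ε) ^ p := by rw [Finset.sum_const, nsmul_eq_mul]

/-- `K` has box-counting dimension at most `m` with constant `C`: at every scale `ε ≤ 1` it is
covered by at most `C * ε ^ (-m)` closed balls of radius `ε`. The power is moved to the other side
of the inequality to avoid division. -/
def HasBoxCountingBound [PseudoEMetricSpace Y] (K : Set Y) (m C : ℝ≥0) : Prop :=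
  ∀ ε : ℝ≥0, 0 < ε → ε ≤ 1 → ∃ t : Finset Y, Metric.IsCover ε K t ∧ t.card * ε ^ (m : ℝ) ≤ C

theorem HasBoxCountingBound.pre_ediam_rpow_prod_le [EMetricSpace X] [EMetricSpace Y]
    {K : Set Y} {m C : ℝ≥0} (hK : HasBoxCountingBound K m C) (d : ℝ≥0) {s : Set X} {r : ℝ≥0}
    (hr₀ : 0 < r) (hr₂ : r ≤ 2) (hsr : Metric.ediam s ≤ r) :
    OuterMeasure.mkMetric'.pre (fun u ↦ Metric.ediam u ^ ((d + m : ℝ≥0) : ℝ)) r (s ×ˢ K) ≤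
      (2 ^ (m : ℝ) * C : ℝ≥0) * (r : ℝ≥0∞) ^ (d : ℝ) := by
  obtain ⟨t, ht, htC⟩ := hK (r / 2) (by positivity) (div_le_one_of_le₀ hr₂ zero_le)
  have h2r : (2 * (r / 2 : ℝ≥0) : ℝ≥0∞) = r := mod_cast mul_div_cancel₀ r two_ne_zero
  have hcount : t.card * r ^ ((d + m : ℝ≥0) : ℝ) ≤ 2 ^ (m : ℝ) * C * r ^ (d : ℝ) := by
    calc t.card * r ^ ((d + m : ℝ≥0) : ℝ)
        = 2 ^ (m : ℝ) * (t.card * (r / 2) ^ (m : ℝ)) * r ^ (d : ℝ) := by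
          rw [NNReal.coe_add, NNReal.rpow_add hr₀.ne', NNReal.div_rpow]
          field_simp
      _ ≤ 2 ^ (m : ℝ) * C * r ^ (d : ℝ) := by gcongr
  have hpre := pre_ediam_rpow_prod_le_card_mul (NNReal.coe_nonneg (d + m)) (hsr.trans h2r.ge) ht
  rw [h2r] at hpre
  refine hpre.trans ?_
  rw [← ENNReal.coe_rpow_of_nonneg _ (NNReal.coe_nonneg _),
    ← ENNReal.coe_rpow_of_nonneg _ d.coe_nonneg]
  exact_mod_cast hcount

theorem HasBoxCountingBound.pre_ediam_rpow_prod_le_mul_ediam_rpow [EMetricSpace X] [EMetricSpace Y]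
    {K : Set Y} {m C : ℝ≥0} (hK : HasBoxCountingBound K m C) (d : ℝ≥0) {s : Set X} {δ : ℝ≥0∞}
    (hδ : Metric.ediam s < min δ 2) :
    OuterMeasure.mkMetric'.pre (fun u ↦ Metric.ediam u ^ ((d + m : ℝ≥0) : ℝ)) δ (s ×ˢ K) ≤
      (2 ^ (m : ℝ) * C : ℝ≥0) * Metric.ediam s ^ (d : ℝ) := by
  have : (𝓝[>] Metric.ediam s).NeBot := nhdsGT_neBot_of_exists_gt ⟨_, hδ⟩
  have hlim : Tendsto (fun r : ℝ≥0∞ ↦ (2 ^ (m : ℝ) * C : ℝ≥0) * r ^ (d : ℝ)) (𝓝[>] Metric.ediam s)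
      (𝓝 ((2 ^ (m : ℝ) * C : ℝ≥0) * Metric.ediam s ^ (d : ℝ))) :=
    ((ENNReal.continuous_const_mul ENNReal.coe_ne_top).comp
      ENNReal.continuous_rpow_const).continuousWithinAt
  -- Approximating from above avoids the scale `0`, which `hK` does not control.
  refine ge_of_tendsto hlim ?_
  filter_upwards [Ioo_mem_nhdsGT hδ] with r ⟨hsr, hr⟩
  lift r to ℝ≥0 using hr.ne_top
  have hr₀ : 0 < r := ENNReal.coe_pos.1 (zero_le.trans_lt hsr)
  have hr₂ : r ≤ 2 := mod_cast (hr.trans_le (min_le_right _ _)).le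
  exact (OuterMeasure.mkMetric'.mono_pre _ (hr.trans_le (min_le_left _ _)).le _).trans
    (hK.pre_ediam_rpow_prod_le d hr₀ hr₂ hsr.le)

theorem HasBoxCountingBound.hausdorffMeasure_prod_le [EMetricSpace X] [EMetricSpace Y]
    [MeasurableSpace X] [BorelSpace X] [MeasurableSpace (X × Y)] [BorelSpace (X × Y)]
    {K : Set Y} {m C : ℝ≥0} (hK : HasBoxCountingBound K m C) (hC : C ≠ 0) (d : ℝ≥0) (A : Set X) :
    μH[(d + m : ℝ≥0)] (A ×ˢ K) ≤ (2 ^ (m : ℝ) * C : ℝ≥0) * μH[d] A := by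
  set c : ℝ≥0 := 2 ^ (m : ℝ) * C
  have hc : c ≠ 0 := by positivity
  set pre := OuterMeasure.mkMetric'.pre fun u : Set (X × Y) ↦ Metric.ediam u ^ ((d + m : ℝ≥0) : ℝ)
  -- As `s ↦ pre δ (s ×ˢ K)` is an outer measure on `X`, comparing it with `mkMetric` only requires
  -- sets of small diameter.
  let ν (δ : ℝ≥0∞) : OuterMeasure X :=
    OuterMeasure.map Prod.fst (OuterMeasure.restrict (univ ×ˢ K) (pre δ))
  have hν (δ : ℝ≥0∞) (s : Set X) : ν δ s = pre δ (s ×ˢ K) := by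
    simp only [ν, OuterMeasure.map_apply, OuterMeasure.restrict_apply, Set.prod_eq,
      preimage_univ, univ_inter]
  have hν_le (δ : ℝ≥0∞) (hδ : 0 < δ) : ν δ ≤ c • OuterMeasure.mkMetric fun x ↦ x ^ (d : ℝ) := by
    obtain ⟨ρ, hρ₀, hρ⟩ := exists_between (lt_min hδ (zero_lt_two' ℝ≥0∞))
    rw [← OuterMeasure.mkMetric_nnreal_smul _ hc]
    refine OuterMeasure.le_mkMetric _ _ ρ hρ₀ fun s hs ↦ ?_
    rw [hν]
    exact hK.pre_ediam_rpow_prod_le_mul_ediam_rpow d (hs.trans_lt hρ)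
  have hμ : μH[(d + m : ℝ≥0)] (A ×ˢ K) = ⨆ (δ : ℝ≥0∞) (_ : 0 < δ), pre δ (A ×ˢ K) := by
    rw [Measure.hausdorffMeasure, ← Measure.coe_toOuterMeasure, Measure.mkMetric_toOuterMeasure]
    simp only [OuterMeasure.mkMetric, OuterMeasure.mkMetric', OuterMeasure.iSup_apply, pre]
  rw [hμ]
  refine iSup₂_le fun δ hδ ↦ ?_
  rw [← hν, Measure.hausdorffMeasure, ← Measure.coe_toOuterMeasure, Measure.mkMetric_toOuterMeasure]
  exact hν_le δ hδ A

theorem HasBoxCountingBound.dimH_prod_le [EMetricSpace X] [EMetricSpace Y] {K : Set Y} {m C : ℝ≥0}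
    (hK : HasBoxCountingBound K m C) (hC : C ≠ 0) (A : Set X) : dimH (A ×ˢ K) ≤ dimH A + m := by
  borelize X (X × Y)
  rw [dimH_eq_iInf A]
  simp_rw [ENNReal.iInf_add]
  refine le_iInf₂ fun d hd ↦ ?_
  have hzero : μH[(d + m : ℝ≥0)] (A ×ˢ K) ≤ 0 := by
    simpa only [hd, mul_zero] using hK.hausdorffMeasure_prod_le hC d A
  exact_mod_cast dimH_le_of_hausdorffMeasure_ne_top (hzero.trans_lt ENNReal.zero_lt_top).ne

theorem isCover_unitCube_range_grid (ι : Type*) [Fintype ι] {N : ℕ} (hN : 0 < N) :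
    Metric.IsCover (N : ℝ≥0)⁻¹ (univ.pi fun _ : ι ↦ Ico (0 : ℝ) 1)
      (range fun (c : ι → Fin N) (j : ι) ↦ (c j / N : ℝ)) := by
  have hN' : (0 : ℝ) < N := Nat.cast_pos.2 hN
  rw [Metric.isCover_iff_subset_iUnion_closedBall]
  intro w hw
  have hwN (j : ι) : 0 ≤ w j * N := mul_nonneg (hw j trivial).1 hN'.le
  have hfloor (j : ι) : ⌊w j * N⌋₊ < N :=
    (Nat.floor_lt (hwN j)).2 (mul_lt_of_lt_one_left hN' (hw j trivial).2)
  refine mem_iUnion₂.2 ⟨_, ⟨fun j ↦ ⟨⌊w j * N⌋₊, hfloor j⟩, rfl⟩, ?_⟩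
  refine (dist_pi_le_iff NNReal.zero_le_coe).2 fun j ↦ ?_
  have hle : (⌊w j * N⌋₊ : ℝ) ≤ w j * N := Nat.floor_le (hwN j)
  have hlt : w j * N < ⌊w j * N⌋₊ + 1 := Nat.lt_floor_add_one _
  calc dist (w j) (⌊w j * N⌋₊ / N : ℝ) = |w j * N - ⌊w j * N⌋₊| / N := by
        rw [← abs_of_pos hN', ← abs_div, abs_of_pos hN', sub_div,
          mul_div_cancel_right₀ _ hN'.ne', Real.dist_eq]
    _ ≤ 1 / N := by gcongr; exact abs_le.2 ⟨by linarith, by linarith⟩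
    _ = ((N : ℝ≥0)⁻¹ : ℝ≥0) := by rw [one_div, NNReal.coe_inv, NNReal.coe_natCast]

theorem hasBoxCountingBound_unitCube (ι : Type*) [Fintype ι] :
    HasBoxCountingBound (univ.pi fun _ : ι ↦ Ico (0 : ℝ) 1) (Fintype.card ι)
      (2 ^ Fintype.card ι) := by
  classical
  intro ε hε₀ hε₁
  simp only [NNReal.coe_natCast, NNReal.rpow_natCast]
  set N := ⌈ε⁻¹⌉₊
  have hN : 0 < N := Nat.ceil_pos.2 (inv_pos.2 hε₀)
  have hNε : N * ε ≤ 2 := calc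
    N * ε ≤ (ε⁻¹ + 1) * ε := by gcongr; exact (Nat.ceil_lt_add_one zero_le).le
    _ = 1 + ε := by field_simp
    _ ≤ 2 := by rw [← one_add_one_eq_two]; gcongr
  have hinv : (N : ℝ≥0)⁻¹ ≤ ε := inv_le_of_inv_le₀ hε₀ (Nat.le_ceil ε⁻¹)
  refine ⟨Finset.univ.image fun (c : ι → Fin N) (j : ι) ↦ (c j / N : ℝ), ?_, ?_⟩
  · rw [Finset.coe_image, Finset.coe_univ, image_univ]
    exact (isCover_unitCube_range_grid ι hN).mono_radius hinv
  · calc ((Finset.univ.image _).card : ℝ≥0) * ε ^ Fintype.card ι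
        ≤ N ^ Fintype.card ι * ε ^ Fintype.card ι := by
          gcongr
          exact_mod_cast Finset.card_image_le.trans_eq (by simp)
      _ = (N * ε) ^ Fintype.card ι := (mul_pow _ _ _).symm
      _ ≤ 2 ^ Fintype.card ι := by gcongr

theorem iUnion_smul_image_unitCube (ι : Type*) [Finite ι] :
    ⋃ n : ℕ, (fun w : ι → ℝ ↦ (n : ℝ) • (w - fun _ ↦ 1 / 2)) '' (univ.pi fun _ ↦ Ico 0 1) =
      univ := by
  cases nonempty_fintype ι
  refine eq_univ_of_forall fun x ↦ mem_iUnion.2 ?_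
  obtain ⟨n, hn⟩ := exists_nat_gt (2 * ‖x‖)
  have hn₀ : (0 : ℝ) < n := (by positivity : 0 ≤ 2 * ‖x‖).trans_lt hn
  refine ⟨n, fun j ↦ x j / n + 1 / 2, fun j _ ↦ ?_, ?_⟩
  · have hj : |x j / n| < 1 / 2 := by
      rw [abs_div, abs_of_pos hn₀, div_lt_iff₀ hn₀]
      linarith [norm_le_pi_norm x j, Real.norm_eq_abs (x j)]
    exact ⟨by linarith [abs_lt.1 hj], by linarith [abs_lt.1 hj]⟩
  · ext j
    simp [mul_div_cancel₀ _ hn₀.ne']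

theorem dimH_prod_univ_le {V : Type*} [EMetricSpace X] [NormedAddCommGroup V] [NormedSpace ℝ V]
    [FiniteDimensional ℝ V] (A : Set X) :
    dimH (A ×ˢ (univ : Set V)) ≤ dimH A + Module.finrank ℝ V := by
  let ι := Fin (Module.finrank ℝ V)
  let e : (ι → ℝ) ≃L[ℝ] V := ContinuousLinearEquiv.ofFinrankEq (by simp [ι])
  let cube : Set (ι → ℝ) := univ.pi fun _ ↦ Ico 0 1
  let f (n : ℕ) (p : X × (ι → ℝ)) : X × V :=
    (p.1, ((n : ℝ) • (e : (ι → ℝ) →L[ℝ] V)) (p.2 - fun _ ↦ 1 / 2))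
  have hf (n : ℕ) : ∃ K, LipschitzWith K (f n) :=
    ⟨_, LipschitzWith.prod_fst.prodMk <| ((n : ℝ) • (e : (ι → ℝ) →L[ℝ] V)).lipschitz.comp <|
      LipschitzWith.prod_snd.sub (LipschitzWith.const _)⟩
  have hcover : A ×ˢ (univ : Set V) ⊆ ⋃ n, f n '' (A ×ˢ cube) := by
    rintro ⟨x, v⟩ ⟨hx, -⟩
    obtain ⟨n, w, hw, hwv⟩ := mem_iUnion.1 ((iUnion_smul_image_unitCube ι).ge (mem_univ (e.symm v)))
    refine mem_iUnion.2 ⟨n, (x, w), ⟨hx, hw⟩, Prod.ext rfl ?_⟩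
    exact (map_smul e _ _).symm.trans ((e.eq_symm_apply).1 hwv)
  calc dimH (A ×ˢ (univ : Set V)) ≤ ⨆ n, dimH (f n '' (A ×ˢ cube)) :=
        (dimH_mono hcover).trans_eq (dimH_iUnion _)
    _ ≤ dimH (A ×ˢ cube) := iSup_le fun n ↦ (hf n).choose_spec.dimH_image_le _
    _ ≤ dimH A + Module.finrank ℝ V := by
        simpa [ι] using (hasBoxCountingBound_unitCube ι).dimH_prod_le (by positivity) A

end HausdorffDimensionOfProducts

section PushOff

open Set Filter Topology Module
open scoped Manifold

variable {E V : Type*} [NormedAddCommGroup E] [NormedSpace ℝ E]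
  [NormedAddCommGroup V] [NormedSpace ℝ V] {U : Set V}

theorem dimH_image_le_of_contDiffOn_of_isOpen [SecondCountableTopology V] {f : V → E}
    {t : Set V} (hU : IsOpen U) (hf : ContDiffOn ℝ 1 f U) (ht : t ⊆ U) :
    dimH (f '' t) ≤ dimH t :=
  dimH_image_le_of_locally_lipschitzOn fun _ hx ↦
    let ⟨C, u, hu, hfu⟩ := (hf.contDiffAt (hU.mem_nhds (ht hx))).exists_lipschitzOnWith
    ⟨C, u, mem_nhdsWithin_of_mem_nhds hu, hfu⟩

variable [FiniteDimensional ℝ V]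

theorem exists_contDiffOn_approx (n : ℕ∞) (hU : IsOpen U) {f : V → E} {ε : V → ℝ}
    (hf : ContinuousOn f U) (hε : ContinuousOn ε U) (hε₀ : ∀ x ∈ U, 0 < ε x) :
    ∃ g : V → E, ContDiffOn ℝ n g U ∧ ∀ x ∈ U, dist (g x) (f x) < ε x := by
  let M : TopologicalSpace.Opens V := ⟨U, hU⟩
  have : LocallyCompactSpace M := hU.locallyCompactSpace
  obtain ⟨g, hg, -⟩ := Continuous.exists_contMDiff_approx (M := M) 𝓘(ℝ, V) n
    hf.domRestrict hε.domRestrict fun x ↦ hε₀ x x.2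
  classical
  let G : V → E := fun x ↦ if hx : x ∈ U then g ⟨x, hx⟩ else 0
  have hG (x : M) : G x = g x := dif_pos x.2
  refine ⟨G, fun x hx ↦ ContDiffAt.contDiffWithinAt ?_, fun x hx ↦ ?_⟩
  · have hGM : ContMDiffAt 𝓘(ℝ, V) 𝓘(ℝ, E) n (fun y : M ↦ G y) ⟨x, hx⟩ := by
      simpa only [hG] using g.contMDiff.contMDiffAt
    exact (contMDiffAt_subtype_iff.1 hGM).contDiffAt
  · simpa only [G, hx, dite_true] using! hg ⟨x, hx⟩

theorem continuous_of_dist_le_of_eqOn_compl {X Y : Type*} [TopologicalSpace X] [MetricSpace Y]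
    {U : Set X} {f g : X → Y} {φ : X → ℝ} (hU : IsOpen U) (hf : Continuous f) (hφ : Continuous φ)
    (hφ₀ : ∀ x ∉ U, φ x = 0) (hg : ContinuousOn g U) (hgf : ∀ x, dist (g x) (f x) ≤ φ x) :
    Continuous g := by
  refine continuous_iff_continuousAt.2 fun x ↦ ?_
  by_cases hx : x ∈ U
  · exact hg.continuousAt (hU.mem_nhds hx)
  · have hφx : Tendsto φ (𝓝 x) (𝓝 0) := hφ₀ x hx ▸ hφ.tendsto x
    have hgx : g x = f x := dist_le_zero.1 ((hgf x).trans_eq (hφ₀ x hx))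
    rw [ContinuousAt, hgx]
    exact (hf.tendsto x).congr_dist <| squeeze_zero (fun _ ↦ dist_nonneg)
      (fun y ↦ (dist_comm _ _).trans_le (hgf y)) hφx

theorem exists_continuous_contDiffOn_eqOn_compl (n : ℕ∞) (hU : IsOpen U) {f : V → E}
    (hf : Continuous f) :
    ∃ g : V → E, Continuous g ∧ ContDiffOn ℝ n g U ∧ EqOn g f Uᶜ := by
  obtain ⟨φ, hφU, hφ, hφ_range⟩ := hU.exists_contDiff_support_eq (n := 0)
  have hφ₀ : ∀ x ∉ U, φ x = 0 := fun x hx ↦ Function.notMem_support.1 (hφU ▸ hx)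
  have hφ_nonneg (x : V) : 0 ≤ φ x := (hφ_range (mem_range_self x)).1
  obtain ⟨g, hg, hgf⟩ := exists_contDiffOn_approx n hU hf.continuousOn hφ.continuous.continuousOn
    fun x hx ↦ (hφ_nonneg x).lt_of_ne' (hφU.ge hx)
  classical
  have hgU : ContDiffOn ℝ n (U.piecewise g f) U := hg.congr (piecewise_eqOn U g f)
  refine ⟨U.piecewise g f, ?_, hgU, piecewise_eqOn_compl U g f⟩
  refine continuous_of_dist_le_of_eqOn_compl hU hf hφ.continuous hφ₀ hgU.continuousOn fun x ↦ ?_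
  by_cases hx : x ∈ U
  · simpa [hx] using (hgf x hx).le
  · simp [hx, hφ_nonneg]

theorem exists_forall_add_smul_notMem [FiniteDimensional ℝ E] {F : Set E}
    (hF : dimH F + finrank ℝ V < finrank ℝ E) (hU : IsOpen U) {g : V → E} {φ : V → ℝ}
    (hg : ContDiffOn ℝ 1 g U) (hφ : ContDiffOn ℝ 1 φ U) (hφ₀ : ∀ w ∈ U, φ w ≠ 0) :
    ∃ v : E, ∀ w ∈ U, g w + φ w • v ∉ F := by
  let Φ (p : E × V) : E := (φ p.2)⁻¹ • (p.1 - g p.2)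
  have hΦ : ContDiffOn ℝ 1 Φ (univ ×ˢ U) :=
    ((hφ.comp contDiffOn_snd fun _ hp ↦ hp.2).inv fun p hp ↦ hφ₀ _ hp.2).smul
      (contDiffOn_fst.sub (hg.comp contDiffOn_snd fun _ hp ↦ hp.2))
  have hdim : dimH (Φ '' (F ×ˢ U)) < finrank ℝ E := calc
    dimH (Φ '' (F ×ˢ U)) ≤ dimH (F ×ˢ U) :=
      dimH_image_le_of_contDiffOn_of_isOpen (isOpen_univ.prod hU) hΦ
        (prod_mono_left (subset_univ F))
    _ ≤ dimH (F ×ˢ (univ : Set V)) := dimH_mono (prod_mono_right (subset_univ U))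
    _ ≤ dimH F + finrank ℝ V := dimH_prod_univ_le F
    _ < finrank ℝ E := hF
  obtain ⟨v, hv⟩ := (dense_compl_of_dimH_lt_finrank hdim).nonempty
  refine ⟨v, fun w hw hwF ↦ hv ⟨(g w + φ w • v, w), ⟨hwF, hw⟩, ?_⟩⟩
  simp only [Φ, add_sub_cancel_left, inv_smul_smul₀ (hφ₀ w hw)]

theorem exists_continuous_eqOn_compl_forall_notMem [FiniteDimensional ℝ E] {F : Set E}
    (hF : dimH F + finrank ℝ V < finrank ℝ E) (hU : IsOpen U) {f : V → E} (hf : Continuous f) :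
    ∃ g : V → E, Continuous g ∧ EqOn g f Uᶜ ∧ ∀ w ∈ U, g w ∉ F := by
  obtain ⟨g, hg, hgU, hgf⟩ := exists_continuous_contDiffOn_eqOn_compl 1 hU hf
  obtain ⟨φ, hφU, hφ, -⟩ := hU.exists_contDiff_support_eq (n := 1)
  obtain ⟨v, hv⟩ := exists_forall_add_smul_notMem hF hU hgU hφ.contDiffOn hφU.ge
  refine ⟨fun w ↦ g w + φ w • v, hg.add (hφ.continuous.smul continuous_const), fun w hw ↦ ?_, hv⟩
  have hφw : φ w = 0 := Function.notMem_support.1 (hφU ▸ hw)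
  simp only [hφw, zero_smul, add_zero, hgf hw]

end PushOff

section HomotopyGroups

open Set Module
open scoped unitInterval

variable {E : Type*} [NormedAddCommGroup E] [NormedSpace ℝ E] [FiniteDimensional ℝ E] {F : Set E}

theorem coe_mem_openCube_iff_notMem_boundary {N : Type*} {y : N → I} :
    (fun j ↦ (y j : ℝ)) ∈ univ.pi (fun _ ↦ Ioo (0 : ℝ) 1) ↔ y ∉ Cube.boundary N := by
  simp only [mem_univ_pi, mem_Ioo, Cube.boundary, mem_ofPred_eq, not_exists, not_or,
    unitInterval.pos_iff_ne_zero, unitInterval.lt_one_iff_ne_one, unitInterval.coe_pos,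
    unitInterval.coe_lt_one]

theorem exists_continuousMap_compl_eqOn_boundary {N : Type*} [Fintype N]
    (hF : dimH F + Fintype.card N < finrank ℝ E) (f : C(N → I, E))
    (hf : MapsTo f (Cube.boundary N) Fᶜ) :
    ∃ g : C(N → I, ↥Fᶜ), ∀ y ∈ Cube.boundary N, (g y : E) = f y := by
  let clamp (w : N → ℝ) : N → I := fun j ↦ projIcc 0 1 zero_le_one (w j)
  have hclamp (y : N → I) : clamp (fun j ↦ y j) = y := funext fun j ↦ projIcc_val zero_le_one (y j)
  obtain ⟨g, hg, hgf, hgF⟩ := exists_continuous_eqOn_compl_forall_notMem (F := F)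
    (U := univ.pi fun _ : N ↦ Ioo (0 : ℝ) 1) (f := f ∘ clamp) (by simpa using hF)
    (isOpen_set_pi finite_univ fun _ _ ↦ isOpen_Ioo) (by fun_prop)
  have hg_boundary {y : N → I} (hy : y ∈ Cube.boundary N) : g (fun j ↦ y j) = f y := by
    rw [hgf fun hyU ↦ coe_mem_openCube_iff_notMem_boundary.1 hyU hy, Function.comp_apply, hclamp]
  have hg_compl (y : N → I) : g (fun j ↦ y j) ∈ Fᶜ := by
    by_cases hy : y ∈ Cube.boundary N
    · exact hg_boundary hy ▸ hf hy
    · exact hgF _ (coe_mem_openCube_iff_notMem_boundary.2 hy)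
  exact ⟨⟨fun y ↦ ⟨g fun j ↦ y j, hg_compl y⟩, by fun_prop⟩, fun y hy ↦ hg_boundary hy⟩

theorem homotopicRel_boundary_of_dimH_lt {N : Type*} [Fintype N]
    (hF : dimH F + (Fintype.card N + 1) < finrank ℝ E) {f g : C(N → I, ↥Fᶜ)}
    (hfg : EqOn f g (Cube.boundary N)) : f.HomotopicRel g (Cube.boundary N) := by
  let H : C(Option N → I, E) :=
    { toFun z := AffineMap.lineMap (f (z ∘ some) : E) (g (z ∘ some) : E) (z none : ℝ)
      continuous_toFun := by
        simp only [AffineMap.lineMap_apply_module]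
        fun_prop }
  have hH₀ {z : Option N → I} (hz : z none = 0) : H z = f (z ∘ some) := by simp [H, hz]
  have hH₁ {z : Option N → I} (hz : z none = 1) : H z = g (z ∘ some) := by simp [H, hz]
  have hH_boundary {z : Option N → I} (hz : z ∘ some ∈ Cube.boundary N) : H z = f (z ∘ some) := by
    simp [H, ← hfg hz]
  have hH_compl : MapsTo H (Cube.boundary (Option N)) Fᶜ := by
    rintro z ⟨_ | j, hj⟩
    · rcases hj with hz | hz
      · exact hH₀ hz ▸ (f _).2
      · exact hH₁ hz ▸ (g _).2
    · exact hH_boundary ⟨j, hj⟩ ▸ (f _).2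
  obtain ⟨B, hB⟩ := exists_continuousMap_compl_eqOn_boundary (by simpa using hF) H hH_compl
  let cons (p : I × (N → I)) : Option N → I := fun o ↦ o.elim p.1 p.2
  have hcons : Continuous cons := continuous_pi <| Option.rec continuous_fst fun j ↦
    (continuous_apply j).comp continuous_snd
  exact ⟨{
    toFun p := B (cons p)
    continuous_toFun := B.continuous.comp hcons
    map_zero_left y := Subtype.ext <| (hB (cons (0, y)) ⟨none, .inl rfl⟩).trans (hH₀ rfl)
    map_one_left y := Subtype.ext <| (hB (cons (1, y)) ⟨none, .inr rfl⟩).trans (hH₁ rfl)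
    prop' t y := fun hy ↦ Subtype.ext <|
      (hB (cons (t, y)) (hy.imp' some fun _ ↦ id)).trans (hH_boundary hy) }⟩

theorem isPathConnected_compl_of_dimH_add_one_lt (hF : dimH F + 1 < finrank ℝ E) :
    IsPathConnected Fᶜ := by
  refine isPathConnected_iff_pathConnectedSpace.2 ⟨?_, fun a b ↦ ?_⟩
  · exact (dense_compl_of_dimH_lt_finrank (le_self_add.trans_lt hF)).nonempty.to_subtype
  · have hab : (ContinuousMap.const (Fin 0 → I) a).HomotopicRel (.const _ b)
        (Cube.boundary (Fin 0)) :=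
      homotopicRel_boundary_of_dimH_lt (by simpa using hF) fun _ ⟨j, _⟩ ↦ j.elim0
    exact hab.homotopic.elim fun h ↦ ⟨h.evalAt 0⟩

theorem subsingleton_homotopyGroup_compl_of_dimH_lt {N : Type*} [Fintype N]
    (hF : dimH F + (Fintype.card N + 1) < finrank ℝ E) (x : ↥Fᶜ) :
    Subsingleton (HomotopyGroup N ↥Fᶜ x) := by
  refine ⟨Quotient.ind₂ fun f g ↦ Quotient.sound ?_⟩
  exact homotopicRel_boundary_of_dimH_lt hF fun y hy ↦
    (GenLoop.boundary f y hy).trans (GenLoop.boundary g y hy).symm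

end HomotopyGroups

open Module in
theorem complement_k_connected_of_dimH_lt_general {E : Type*} [NormedAddCommGroup E]
    [NormedSpace ℝ E] [FiniteDimensional ℝ E] (k : ℕ) (F : Set E)
    (hdim : dimH F < (finrank ℝ E : ENNReal) - k - 1) :
    IsPathConnected Fᶜ ∧
      ∀ x : ↥Fᶜ, ∀ i ≤ k, Subsingleton (HomotopyGroup (Fin i) ↥Fᶜ x) := by
  have hF {i : ℕ} (hi : i ≤ k) : dimH F + (i + 1) < finrank ℝ E := calc
    dimH F + (i + 1) ≤ dimH F + (k + 1) := by gcongr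
    _ < finrank ℝ E := by rwa [tsub_tsub, lt_tsub_iff_right] at hdim
  refine ⟨isPathConnected_compl_of_dimH_add_one_lt ?_, fun x i hi ↦ ?_⟩
  · simpa using hF k.zero_le
  · exact subsingleton_homotopyGroup_compl_of_dimH_lt (by simpa using hF hi) x

/-- If `F ⊆ ℝⁿ` (`n ≥ 3`) is compact with `dimH F < n - k - 1`, then `ℝⁿ \ F` is
`k`-connected: it is path-connected and its homotopy groups `π_i` vanish for `i ≤ k`. -/
theorem complement_k_connected_of_dimH_lt (n k : ℕ) (hn : 3 ≤ n) (hk : 1 ≤ k)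
    (F : Set (EuclideanSpace ℝ (Fin n))) (hF : IsCompact F)
    (hdim : dimH F < (n : ENNReal) - k - 1) :
    IsPathConnected Fᶜ ∧
      ∀ (x : (Fᶜ : Set (EuclideanSpace ℝ (Fin n)))), ∀ i ≤ k,
        Subsingleton (HomotopyGroup (Fin i) (Fᶜ : Set (EuclideanSpace ℝ (Fin n))) x) :=
  complement_k_connected_of_dimH_lt_general k F (by rwa [finrank_euclideanSpace_fin])
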